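/- arXiv:2302.08923 — 4 statements merged into one kernel-verified Lean document; each statement's English description precedes it below -/
import Mathlib

section
/- Let α, λ > 0, Δ > 0, ρ ≥ 0, γ ≥ 0, π ∈ ℝ, and let V > 0, q, m, h, V̂, q̂, m̂, ĥ be real numbers satisfying the coupled system: V̂ = α/(1+V), q̂ = α(ρ + Δ + q − 2m + (π−h)²)/(1+V)², m̂ = α/(1+V), ĥ = α(π−h)/(1+V), V = 1/(λ + V̂), q = V²(q̂ + ρ m̂² + 2π m̂ ĥ + γ ĥ²), m = V(ρ m̂ + π ĥ), h = V(γ ĥ + π m̂). Set η := V·V̂, ε_gen := ρ + Δ + q − 2m + (π−h)², and ε_tr := ε_gen/(1+V)². Then η ∈ (0, min(α,1)) (so α − η² > 0 and 1 + γη > 0), and ε_gen = g(α,Δ,ρ,η)·(1 − π² A(η)) and ε_tr = t(α,Δ,ρ,η)·(1 − π² A(η)), where A(η) := (η−1)²(γη² + 2η − 1)/((Δ + (η−1)²ρ)(1+γη)²), g(α,Δ,ρ,η) := α(Δ + (η−1)²ρ)/(α − η²), and t(α,Δ,ρ,η) := (α−η)²(Δ + (η−1)²ρ)/(α(α − η²)).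 -/
/-- Exact asymptotics for ridge regression on a symmetric two-cluster Gaussian
mixture with identity covariances: the solution of the coupled saddle-point
system satisfies, with `η := V·V̂`, `ε_gen := ρ + Δ + q − 2m + (π−h)²` and
`ε_tr := ε_gen/(1+V)²`, that `η ∈ (0, min α 1)` (so `α − η² > 0` and
`1 + γη > 0`), and `ε_gen = g(α,Δ,ρ,η)(1 − π²A(η))`,
`ε_tr = t(α,Δ,ρ,η)(1 − π²A(η))`. -/
theorem exact_asymptotics_two_cluster
    (α lam Δ ρ γ π V q m h Vhat qhat mhat hhat : ℝ)
    (hα : 0 < α) (hlam : 0 < lam) (hΔ : 0 < Δ) (hρ : 0 ≤ ρ) (hγ : 0 ≤ γ)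
    (hV : 0 < V)
    (e1 : Vhat = α / (1 + V))
    (e2 : qhat = α * (ρ + Δ + q - 2*m + (π - h)^2) / (1 + V)^2)
    (e3 : mhat = α / (1 + V))
    (e4 : hhat = α * (π - h) / (1 + V))
    (e5 : V = 1 / (lam + Vhat))
    (e6 : q = V^2 * (qhat + ρ * mhat^2 + 2*π*mhat*hhat + γ*hhat^2))
    (e7 : m = V * (ρ * mhat + π * hhat))
    (e8 : h = V * (γ * hhat + π * mhat))
    (η εgen εtr : ℝ)
    (hη : η = V * Vhat)
    (hgen : εgen = ρ + Δ + q - 2*m + (π - h)^2)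
    (htr : εtr = εgen / (1 + V)^2) :
    (0 < η ∧ η < min α 1) ∧ 0 < α - η^2 ∧ 0 < 1 + γ*η ∧
    εgen = (α * (Δ + (η-1)^2*ρ) / (α - η^2)) *
      (1 - π^2 * ((η-1)^2*(γ*η^2 + 2*η - 1) /
        ((Δ + (η-1)^2*ρ)*(1+γ*η)^2))) ∧
    εtr = ((α-η)^2*(Δ + (η-1)^2*ρ) / (α*(α - η^2))) *
      (1 - π^2 * ((η-1)^2*(γ*η^2 + 2*η - 1) /
        ((Δ + (η-1)^2*ρ)*(1+γ*η)^2))) := by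
  have h1V : 0 < 1 + V := by linarith
  have hVh : 0 < Vhat := by rw [e1]; positivity
  have hη0 : 0 < η := by rw [hη]; positivity
  have hsum : V * (lam + Vhat) = 1 := by
    have : lam + Vhat ≠ 0 := by positivity
    rw [e5, one_div, inv_mul_cancel₀ this]
  have hη1 : η < 1 := by
    have : 0 < V * lam := by positivity
    rw [hη]; linarith
  have hVm : Vhat * (1 + V) = α := by rw [e1]; field_simp
  have hαη : α - η = Vhat := by rw [hη]; linarith
  have hηα : η < α := by linarith
  have hD : 0 < α - η^2 := by nlinarith
  have hG : 0 < 1 + γ*η := by positivity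
  have hR : 0 < Δ + (η-1)^2*ρ := by positivity
  have hm : mhat = Vhat := by rw [e3, e1]
  have hh : hhat = Vhat * (π - h) := by rw [e4, e1]; ring
  have hq : α * qhat = Vhat^2 * εgen := by
    rw [e2, e1, hgen]; field_simp
  have hs : (π - h) * (1 + γ*η) = π * (1 - η) := by
    have : h = γ * η * (π - h) + π * η := by
      rw [hh, hm] at e8
      rw [hη]; linarith
    linarith
  have hs' : π - h = π * (1 - η) / (1 + γ*η) := by
    rw [eq_div_iff hG.ne']; exact hs
  have hm' : m = ρ * η + π * η * (π - h) := by
    rw [e7, hm, hh, hη]; ring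
  have hq' : α * q = η^2 * εgen + α * (ρ * η^2 + 2*π*η^2*(π - h) + γ*η^2*(π-h)^2) := by
    have : α * q = V^2 * (α * qhat) + α * V^2 * (ρ * mhat^2 + 2*π*mhat*hhat + γ*hhat^2) := by
      rw [e6]; ring
    rw [this, hq, hm, hh, hη]; ring
  have key : εgen * (α - η^2) = α * (Δ + (η-1)^2*ρ - 2*π*η*(1-η)*(π-h) + (1+γ*η^2)*(π-h)^2) := by
    have : α * εgen = α * (ρ + Δ + (π-h)^2) + α * q - 2 * α * m := by rw [hgen]; ring
    rw [hq', hm'] at this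
    linear_combination this
  have hE : εgen = (α * (Δ + (η-1)^2*ρ) / (α - η^2)) *
      (1 - π^2 * ((η-1)^2*(γ*η^2 + 2*η - 1) /
        ((Δ + (η-1)^2*ρ)*(1+γ*η)^2))) := by
    rw [eq_div_of_mul_eq hD.ne' key, hs']
    have a1 := hD.ne'
    have a2 := hG.ne'
    have a3 := hR.ne'
    generalize α - η^2 = D at *
    generalize hRR : Δ + (η-1)^2*ρ = R at *
    field_simp
    ring
  refine ⟨⟨hη0, lt_min hηα hη1⟩, hD, hG, hE, ?_⟩
  have ht : εtr = (α - η)^2 / α^2 * εgen := by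
    rw [htr, hαη, ← hVm]; field_simp
  have hc : (α-η)^2*(Δ + (η-1)^2*ρ) / (α*(α - η^2))
      = (α - η)^2 / α^2 * (α * (Δ + (η-1)^2*ρ) / (α - η^2)) := by
    have a1 := hD.ne'
    generalize α - η^2 = D at *
    field_simp
  rw [hc, ht, mul_assoc, ← hE]
end

section
/- Fix α > 1, Δ > 0, ρ ≥ 0, γ ≥ 0 and π ∈ ℝ. With η(α,λ) := 1 + (1/2)(α − 1 + λ − √(4λ + (α − 1 + λ)²)), the composite expressions g(α,Δ,ρ,η(α,λ))·(1 − π² A(η(α,λ))) and t(α,Δ,ρ,η(α,λ))·(1 − π² A(η(α,λ))) converge, as λ → 0⁺, to Δα/(α − 1) and Δ(α − 1)/α respectively; in particular the limits are independent of π, ρ and γ. -/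
open Filter

/-- The effective regularization parameter
`η(α,λ) := 1 + (1/2)(α − 1 + λ − √(4λ + (α − 1 + λ)²))`. -/
noncomputable def etaFun (α lam : ℝ) : ℝ :=
  1 + (1/2) * (α - 1 + lam - Real.sqrt (4*lam + (α - 1 + lam)^2))

/-- The correction factor `A(η)`. -/
noncomputable def AFun (Δ ρ γ η : ℝ) : ℝ :=
  (η-1)^2 * (γ*η^2 + 2*η - 1) / ((Δ + (η-1)^2*ρ) * (1+γ*η)^2)

/-- The Gaussian generalization error `g(α,Δ,ρ,η)`. -/
noncomputable def gFun (α Δ ρ η : ℝ) : ℝ :=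
  α * (Δ + (η-1)^2*ρ) / (α - η^2)

/-- The Gaussian training error `t(α,Δ,ρ,η)`. -/
noncomputable def tFun (α Δ ρ η : ℝ) : ℝ :=
  (α-η)^2 * (Δ + (η-1)^2*ρ) / (α * (α - η^2))

/-- Restoration of Gaussian universality for correlated teachers in the
underparametrized regime `α > 1` at vanishing regularization: as `λ → 0⁺`,
the generalization error `g·(1 − π²A)` tends to `Δα/(α − 1)` and the training
error `t·(1 − π²A)` tends to `Δ(α − 1)/α`, independently of `π, ρ, γ`. -/
theorem universality_restoration_underparam
    (α Δ ρ γ π : ℝ) (hα : 1 < α) (hΔ : 0 < Δ) (hρ : 0 ≤ ρ) (hγ : 0 ≤ γ) :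
    Tendsto
      (fun lam : ℝ =>
        gFun α Δ ρ (etaFun α lam) * (1 - π^2 * AFun Δ ρ γ (etaFun α lam)))
      (nhdsWithin 0 (Set.Ioi 0)) (nhds (Δ * α / (α - 1))) ∧
    Tendsto
      (fun lam : ℝ =>
        tFun α Δ ρ (etaFun α lam) * (1 - π^2 * AFun Δ ρ γ (etaFun α lam)))
      (nhdsWithin 0 (Set.Ioi 0)) (nhds (Δ * (α - 1) / α)) := by
  have hη0 : etaFun α 0 = 1 := by
    have h : Real.sqrt (4*0 + (α - 1 + 0)^2) = α - 1 := by
      rw [mul_zero, zero_add, add_zero]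
      exact Real.sqrt_sq (by linarith)
    unfold etaFun
    rw [h]; ring
  have hηc : ContinuousAt (etaFun α) 0 := by
    unfold etaFun
    fun_prop
  have h1 : α - 1 ≠ 0 := by linarith
  have h0 : α ≠ 0 := by linarith
  have h2 : α - (1:ℝ)^2 ≠ 0 := by simpa using h1
  have h3 : 1 + γ * 1 ≠ 0 := by linarith
  have h4 : Δ + ((1:ℝ) - 1)^2 * ρ ≠ 0 := by simpa using hΔ.ne'
  have hA : ContinuousAt (AFun Δ ρ γ) 1 := by
    unfold AFun
    exact ContinuousAt.div (by fun_prop) (by fun_prop) (mul_ne_zero h4 (pow_ne_zero 2 h3))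
  have hg : ContinuousAt (gFun α Δ ρ) 1 := by
    unfold gFun
    exact ContinuousAt.div (by fun_prop) (by fun_prop) h2
  have ht : ContinuousAt (tFun α Δ ρ) 1 := by
    unfold tFun
    exact ContinuousAt.div (by fun_prop) (by fun_prop) (mul_ne_zero h0 h2)
  have hη : Tendsto (etaFun α) (nhdsWithin 0 (Set.Ioi 0)) (nhds 1) := by
    have := hηc.tendsto.mono_left (nhdsWithin_le_nhds (s := Set.Ioi 0))
    rwa [hη0] at this
  have hA1 : AFun Δ ρ γ 1 = 0 := by simp [AFun]
  have hg1 : gFun α Δ ρ 1 = Δ * α / (α - 1) := by simp [gFun, mul_comm]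
  have ht1 : tFun α Δ ρ 1 = Δ * (α - 1) / α := by
    simp only [tFun, one_pow, sub_self]
    field_simp
    ring
  have hF := ((hA.tendsto.comp hη).const_mul (π^2)).const_sub 1
  constructor
  · have := (hg.tendsto.comp hη).mul hF
    rw [hA1, hg1, mul_zero, sub_zero, mul_one] at this
    exact this
  · have := (ht.tendsto.comp hη).mul hF
    rw [hA1, ht1, mul_zero, sub_zero, mul_one] at this
    exact this
end

section
/- Fix 0 < α < 1, Δ > 0, ρ ≥ 0, γ ≥ 0 and π ∈ ℝ. With η(α,λ) := 1 + (1/2)(α − 1 + λ − √(4λ + (α − 1 + λ)²)), as λ → 0⁺ the expression g(α,Δ,ρ,η(α,λ))·(1 − π² A(η(α,λ))) converges to π²(α − 1)(α²γ + 2α − 1)/(αγ + 1)² − ((α − 1)²ρ + Δ)/(α − 1), and the expression t(α,Δ,ρ,η(α,λ))·(1 − π² A(η(α,λ))) converges to 0. -/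
open Filter

/-- In the overparametrized regime `0 < α < 1`, as `λ → 0⁺` the generalization
error `g·(1 − π²A)` tends to
`π²(α − 1)(α²γ + 2α − 1)/(αγ + 1)² − ((α − 1)²ρ + Δ)/(α − 1)`, and the training
error `t·(1 − π²A)` tends to `0`. -/
theorem overparam_vanishing_regularization
    (α Δ ρ γ π : ℝ) (hα0 : 0 < α) (hα1 : α < 1) (hΔ : 0 < Δ) (hρ : 0 ≤ ρ)
    (hγ : 0 ≤ γ) :
    Tendsto
      (fun lam : ℝ =>
        gFun α Δ ρ (etaFun α lam) * (1 - π^2 * AFun Δ ρ γ (etaFun α lam)))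
      (nhdsWithin 0 (Set.Ioi 0))
      (nhds (π^2 * (α - 1) * (α^2*γ + 2*α - 1) / (α*γ + 1)^2
        - ((α - 1)^2 * ρ + Δ) / (α - 1))) ∧
    Tendsto
      (fun lam : ℝ =>
        tFun α Δ ρ (etaFun α lam) * (1 - π^2 * AFun Δ ρ γ (etaFun α lam)))
      (nhdsWithin 0 (Set.Ioi 0)) (nhds 0) := by
  have h0 : etaFun α 0 = α := by
    have : Real.sqrt (4*0 + (α - 1 + 0)^2) = 1 - α := by
      rw [show 4*0 + (α - 1 + 0)^2 = (1 - α)^2 by ring]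
      exact Real.sqrt_sq (by linarith)
    unfold etaFun
    rw [this]; ring
  have hc : Continuous (fun lam : ℝ => etaFun α lam) := by
    unfold etaFun; fun_prop
  have hη : Tendsto (fun lam : ℝ => etaFun α lam) (nhdsWithin 0 (Set.Ioi 0)) (nhds α) := by
    have := hc.tendsto 0
    rw [h0] at this
    exact this.mono_left nhdsWithin_le_nhds
  have hD : Δ + (α-1)^2*ρ ≠ 0 := by positivity
  have hG : 1 + γ*α ≠ 0 := by positivity
  have hG' : α*γ + 1 ≠ 0 := by positivity
  have h1 : α - 1 ≠ 0 := by linarith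
  have hq : α - α^2 ≠ 0 := by
    have : 0 < α * (1 - α) := mul_pos hα0 (by linarith)
    intro h; nlinarith
  have hA : ContinuousAt (fun η => AFun Δ ρ γ η) α := by
    unfold AFun
    exact ContinuousAt.div (by fun_prop) (by fun_prop) (mul_ne_zero hD (pow_ne_zero 2 hG))
  have hg : ContinuousAt (fun η => gFun α Δ ρ η) α := by
    unfold gFun
    exact ContinuousAt.div (by fun_prop) (by fun_prop) hq
  have ht : ContinuousAt (fun η => tFun α Δ ρ η) α := by
    unfold tFun
    exact ContinuousAt.div (by fun_prop) (by fun_prop) (mul_ne_zero hα0.ne' hq)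
  have hF : ContinuousAt (fun η => 1 - π^2 * AFun Δ ρ γ η) α :=
    continuousAt_const.sub (continuousAt_const.mul hA)
  constructor
  · have key : Tendsto
      (fun lam : ℝ =>
        gFun α Δ ρ (etaFun α lam) * (1 - π^2 * AFun Δ ρ γ (etaFun α lam)))
      (nhdsWithin 0 (Set.Ioi 0))
      (nhds (gFun α Δ ρ α * (1 - π^2 * AFun Δ ρ γ α))) :=
      (hg.tendsto.comp hη).mul (hF.tendsto.comp hη)
    convert key using 1
    congr 1
    have hg1 : gFun α Δ ρ α = -((Δ + (α-1)^2*ρ) / (α - 1)) := by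
      unfold gFun
      rw [show α - α^2 = α * (-(α - 1)) by ring, mul_div_mul_left _ _ hα0.ne', div_neg]
    rw [hg1]
    unfold AFun
    rw [show α*γ + 1 = 1 + γ*α by ring]
    generalize hDD : Δ + (α-1)^2*ρ = D at *
    generalize 1 + γ*α = G at *
    rw [show (α-1)^2*ρ + Δ = D by rw [← hDD]; ring]
    field_simp
    ring
  · have key : Tendsto
      (fun lam : ℝ =>
        tFun α Δ ρ (etaFun α lam) * (1 - π^2 * AFun Δ ρ γ (etaFun α lam)))
      (nhdsWithin 0 (Set.Ioi 0))
      (nhds (tFun α Δ ρ α * (1 - π^2 * AFun Δ ρ γ α))) :=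
      (ht.tendsto.comp hη).mul (hF.tendsto.comp hη)
    convert key using 1
    congr 1
    simp [tFun]
end

section
/- Let C be a nonempty finite index set, α > 0, Δ ∈ ℝ, and for each c ∈ C let p_c > 0 with Σ_{c∈C} p_c = 1, and let V_c > −1 and R_c be real numbers. Define V̂_c := α p_c/(1 + V_c) and q̂_c := α p_c (Δ + R_c)/(1 + V_c)². Assume that Σ_{c∈C} V_c V̂_c = 1 and Σ_{c∈C} (R_c V̂_c − V_c q̂_c) = 0. Then (1/α)·Σ_{c∈C} q̂_c = Δ(α − 1)/α. -/
/-- Algebraic core of the strong universality of the square loss at vanishing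
regularization: with `V̂_c := α p_c/(1 + V_c)` and
`q̂_c := α p_c (Δ + R_c)/(1 + V_c)²`, the constraints `Σ_c V_c V̂_c = 1` and
`Σ_c (R_c V̂_c − V_c q̂_c) = 0` imply that the training error
`(1/α)·Σ_c q̂_c` equals `Δ(α − 1)/α`. -/
theorem strong_universality_training_error {C : Type*} [Fintype C] [Nonempty C]
    (α Δ : ℝ) (hα : 0 < α)
    (p V R Vhat qhat : C → ℝ)
    (hp : ∀ c, 0 < p c) (hpsum : ∑ c, p c = 1)
    (hV : ∀ c, -1 < V c)
    (hVhat : ∀ c, Vhat c = α * p c / (1 + V c))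
    (hqhat : ∀ c, qhat c = α * p c * (Δ + R c) / (1 + V c)^2)
    (hsum1 : ∑ c, V c * Vhat c = 1)
    (hsum2 : ∑ c, (R c * Vhat c - V c * qhat c) = 0) :
    (1/α) * ∑ c, qhat c = Δ * (α - 1) / α := by
  have key : ∀ c, qhat c = Δ * (α * p c - V c * Vhat c) + (R c * Vhat c - V c * qhat c) := by
    intro c
    have h : (1 + V c) ≠ 0 := by
      have h0 := hV c
      intro h1
      linarith
    rw [hqhat, hVhat]
    field_simp
    ring
  have hs : ∑ c, qhat c = Δ * (α - 1) := by
    rw [Finset.sum_congr rfl (fun c _ => key c), Finset.sum_add_distrib, hsum2,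
      ← Finset.mul_sum, Finset.sum_sub_distrib, ← Finset.mul_sum, hpsum, hsum1]
    ring
  rw [hs]
  ring
end
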